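/- Let P be a finite set of points in the plane in general position and let (a, b, c) be a triangle of the L∞-Delaunay triangulation of P, i.e., a, b, c ∈ P all lie on the boundary of some axis-aligned square with empty interior. Then there is a path from a to b in the θ₄-graph of P of length at most (1+√2)·(√2+36)·‖a−b‖₂. -/

import Mathlib

open scoped BigOperators

/-- Euclidean distance between two points of the plane. -/
noncomputable def dist2 (p q : ℝ × ℝ) : ℝ := Real.sqrt ((p.1 - q.1) ^ 2 + (p.2 - q.2) ^ 2)

/-- `L₁` distance between two points of the plane. -/
def dist1 (p q : ℝ × ℝ) : ℝ := |p.1 - q.1| + |p.2 - q.2|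

/-- `L∞` distance between two points of the plane (half the side of `S_t(s)`). -/
def distInf (p q : ℝ × ℝ) : ℝ := max |p.1 - q.1| |p.2 - q.2|

/-- `cone i p q` : the point `q` lies in the open cone (quadrant) `C_i(p)`. -/
def cone (i : ℕ) (p q : ℝ × ℝ) : Prop :=
  if i = 0 then p.1 < q.1 ∧ q.2 < p.2
  else if i = 1 then p.1 < q.1 ∧ p.2 < q.2
  else if i = 2 then q.1 < p.1 ∧ p.2 < q.2
  else q.1 < p.1 ∧ q.2 < p.2

/-- General position: no two points of `P` on a common vertical line, horizontal line,
or line of slope `+1` or `-1`. -/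
def GenPos (P : Finset (ℝ × ℝ)) : Prop :=
  ∀ p ∈ P, ∀ q ∈ P, p ≠ q →
    p.1 ≠ q.1 ∧ p.2 ≠ q.2 ∧ p.2 - p.1 ≠ q.2 - q.1 ∧ p.2 + p.1 ≠ q.2 + q.1

/-- `IsNbr P i p q` : `q = n_i(p)`, i.e. `q` is a point of `P` in `C_i(p)` minimizing
the `L₁`-distance to `p`. -/
def IsNbr (P : Finset (ℝ × ℝ)) (i : ℕ) (p q : ℝ × ℝ) : Prop :=
  q ∈ P ∧ cone i p q ∧ ∀ r ∈ P, cone i p r → dist1 p q ≤ dist1 p r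

/-- Adjacency in the θ₄-graph of `P`. -/
def Theta4Adj (P : Finset (ℝ × ℝ)) (p q : ℝ × ℝ) : Prop :=
  p ∈ P ∧ q ∈ P ∧ ∃ i < 4, (IsNbr P i p q ∨ IsNbr P i q p)

/-- A walk with `k` edges in the θ₄-graph of `P`, given by its vertices `v 0, …, v k`. -/
def IsTheta4Path (P : Finset (ℝ × ℝ)) (k : ℕ) (v : ℕ → ℝ × ℝ) : Prop :=
  v 0 ∈ P ∧ ∀ j < k, Theta4Adj P (v j) (v (j + 1))

/-- The Euclidean length of a path with `k` edges. -/
noncomputable def pathLength (k : ℕ) (v : ℕ → ℝ × ℝ) : ℝ :=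
  ∑ j ∈ Finset.range k, dist2 (v j) (v (j + 1))

/-- `p` is `t`-protected: no point of `P` lying in `C₁(p)` is on or below the line `ℓ⁻_t`
of slope `-1` through `t`. -/
def TProtected (P : Finset (ℝ × ℝ)) (t p : ℝ × ℝ) : Prop :=
  ∀ q ∈ P, cone 1 p q → t.1 + t.2 < q.1 + q.2

/-- Membership in the (closed) axis-aligned square with bottom-left corner `(x0, y0)`
and side length `L`. -/
def inSquare (x0 y0 L : ℝ) (q : ℝ × ℝ) : Prop :=
  x0 ≤ q.1 ∧ q.1 ≤ x0 + L ∧ y0 ≤ q.2 ∧ q.2 ≤ y0 + L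

/-- `q` lies on the left side of the square. -/
def onLeft (x0 y0 L : ℝ) (q : ℝ × ℝ) : Prop := q.1 = x0 ∧ y0 ≤ q.2 ∧ q.2 ≤ y0 + L

/-- `q` lies on the right side of the square. -/
def onRight (x0 y0 L : ℝ) (q : ℝ × ℝ) : Prop := q.1 = x0 + L ∧ y0 ≤ q.2 ∧ q.2 ≤ y0 + L

/-- `q` lies on the bottom side of the square. -/
def onBottom (x0 y0 L : ℝ) (q : ℝ × ℝ) : Prop := q.2 = y0 ∧ x0 ≤ q.1 ∧ q.1 ≤ x0 + L

/-- `q` lies on the top side of the square. -/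
def onTop (x0 y0 L : ℝ) (q : ℝ × ℝ) : Prop := q.2 = y0 + L ∧ x0 ≤ q.1 ∧ q.1 ≤ x0 + L

/-- `a` and `b` lie on two sides of the square that share a corner. -/
def onConsecutiveSides (x0 y0 L : ℝ) (a b : ℝ × ℝ) : Prop :=
  (onBottom x0 y0 L a ∧ onLeft x0 y0 L b) ∨ (onBottom x0 y0 L a ∧ onRight x0 y0 L b) ∨
  (onTop x0 y0 L a ∧ onLeft x0 y0 L b) ∨ (onTop x0 y0 L a ∧ onRight x0 y0 L b) ∨
  (onLeft x0 y0 L a ∧ onBottom x0 y0 L b) ∨ (onRight x0 y0 L a ∧ onBottom x0 y0 L b) ∨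
  (onLeft x0 y0 L a ∧ onTop x0 y0 L b) ∨ (onRight x0 y0 L a ∧ onTop x0 y0 L b)

/-- `q` lies on the boundary of the square with bottom-left corner `(x0, y0)` and side `L`. -/
def onBoundary (x0 y0 L : ℝ) (q : ℝ × ℝ) : Prop :=
  inSquare x0 y0 L q ∧ (q.1 = x0 ∨ q.1 = x0 + L ∨ q.2 = y0 ∨ q.2 = y0 + L)

/-!
Fix a target `t`. In the coordinates along the bisectors of the cones, `C_i(p)` is a quadrant
bisected by a coordinate axis, an edge leaving `p` in `C_i(p)` is at most as long as its progress
along that axis, and the `L∞`-distance to `t` is half the sum of the absolute coordinates.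

From `p` in `C_i(t)`, sweep perpendicularly towards the bisector of `C_i(t)` as long as this does
not cross it, then alternate single steps into the cone opposite to `C_i`, which descend to the
highest lower point, with such sweeps. No sweep or descent increases the `L∞`-distance to `t`, and
the cost telescopes. If `D/2 < ‖p - t‖∞ ≤ D`, stop once the distance is at most `D/2` or the walk
has passed `t`. Either way the octant at `t` of some point on the walk then contains no point whose
distance exceeds `D/2` but not the current one. Hence at most eight such phases, each of length at
most `5 D`, halve the distance, and by a geometric series length `80 ‖p - t‖∞` suffices.
-/

theorem GenPos.injOn_fst {P : Finset (ℝ × ℝ)} (hP : GenPos P) :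
    Set.InjOn Prod.fst (P : Set (ℝ × ℝ)) :=
  fun p hp q hq h => by_contra fun hne => (hP p hp q hq hne).1 h

theorem GenPos.injOn_snd {P : Finset (ℝ × ℝ)} (hP : GenPos P) :
    Set.InjOn Prod.snd (P : Set (ℝ × ℝ)) :=
  fun p hp q hq h => by_contra fun hne => (hP p hp q hq hne).2.1 h

theorem dist2_le_dist1 (p q : ℝ × ℝ) : dist2 p q ≤ dist1 p q := by
  refine Real.sqrt_le_iff.2 ⟨by unfold dist1; positivity, ?_⟩
  have hmul := mul_nonneg (abs_nonneg (p.1 - q.1)) (abs_nonneg (p.2 - q.2))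
  rw [dist1, add_sq, sq_abs, sq_abs]
  linarith

theorem distInf_le_dist2 (p q : ℝ × ℝ) : distInf p q ≤ dist2 p q :=
  max_le (Real.abs_le_sqrt (by linarith [sq_nonneg (p.2 - q.2)]))
    (Real.abs_le_sqrt (by linarith [sq_nonneg (p.1 - q.1)]))

theorem distInf_nonneg (p q : ℝ × ℝ) : 0 ≤ distInf p q :=
  (abs_nonneg _).trans (le_max_left _ _)

theorem distInf_self (p : ℝ × ℝ) : distInf p p = 0 := by
  simp [distInf]

theorem eighty_mul_distInf_le (p q : ℝ × ℝ) :
    80 * distInf p q ≤ (1 + Real.sqrt 2) * (Real.sqrt 2 + 36) * dist2 p q := by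
  have hsqrt : 1.4 ≤ Real.sqrt 2 := Real.le_sqrt_of_sq_le (by norm_num)
  exact mul_le_mul (by nlinarith) (distInf_le_dist2 p q) (distInf_nonneg p q) (by positivity)

theorem eq_of_distInf_le_zero {p q : ℝ × ℝ} (h : distInf p q ≤ 0) : p = q :=
  Prod.ext (sub_eq_zero.1 (abs_nonpos_iff.1 ((le_max_left _ _).trans h)))
    (sub_eq_zero.1 (abs_nonpos_iff.1 ((le_max_right _ _).trans h)))

@[elab_as_elim]
theorem induction_on_value {α β : Type*} [Preorder β] {s : Finset α} (f : α → β) {C : α → Prop}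
    {p : α} (hp : p ∈ s) (h : ∀ p ∈ s, (∀ q ∈ s, f q < f p → C q) → C p) : C p :=
  (Set.wellFoundedOn_image.1 (s.finite_toSet.image f).isWF).induction hp h

/-- The θ₄-graph of `P` has a `p`-`q`-path of Euclidean length at most `ℓ`. -/
def ReachableWithin (P : Finset (ℝ × ℝ)) (p q : ℝ × ℝ) (ℓ : ℝ) : Prop :=
  ∃ (k : ℕ) (v : ℕ → ℝ × ℝ), IsTheta4Path P k v ∧ v 0 = p ∧ v k = q ∧ pathLength k v ≤ ℓ

namespace ReachableWithin

variable {P : Finset (ℝ × ℝ)} {p q r : ℝ × ℝ} {ℓ m : ℝ}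

theorem refl (hp : p ∈ P) : ReachableWithin P p p 0 :=
  ⟨0, fun _ => p, ⟨hp, fun _ hj => absurd hj (Nat.not_lt_zero _)⟩, rfl, rfl, by simp [pathLength]⟩

theorem mono (h : ReachableWithin P p q ℓ) (hle : ℓ ≤ m) : ReachableWithin P p q m :=
  let ⟨k, v, hv, h0, hk, hlen⟩ := h
  ⟨k, v, hv, h0, hk, hlen.trans hle⟩

theorem cons (hadj : Theta4Adj P p q) (h : ReachableWithin P q r ℓ) :
    ReachableWithin P p r (dist2 p q + ℓ) := by
  obtain ⟨k, v, ⟨-, hv⟩, rfl, rfl, hlen⟩ := h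
  refine ⟨k + 1, fun j => Nat.casesOn j p v, ⟨hadj.1, ?_⟩, rfl, rfl, ?_⟩
  · rintro (_ | j) hj
    · exact hadj
    · exact hv j (by omega)
  · rw [pathLength, Finset.sum_range_succ', add_comm]
    exact add_le_add_right hlen _

theorem trans (h₁ : ReachableWithin P p q ℓ) (h₂ : ReachableWithin P q r m) :
    ReachableWithin P p r (ℓ + m) := by
  obtain ⟨k, v, ⟨hv₀, hv⟩, rfl, rfl, hlen⟩ := h₁
  induction k generalizing v ℓ with
  | zero => exact h₂.mono (by simpa [pathLength] using hlen)
  | succ k ih =>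
    have htail := ih (fun j => v (j + 1)) (hv 0 (by omega)).2.1
      (fun j hj => hv (j + 1) (by omega)) le_rfl h₂
    refine (htail.cons (hv 0 (by omega))).mono ?_
    rw [pathLength, Finset.sum_range_succ'] at hlen
    simp only [pathLength]
    linarith

theorem of_isNbr {i : Fin 4} (hp : p ∈ P) (h : IsNbr P i p q) :
    ReachableWithin P p q (dist1 p q) :=
  ((refl h.1).cons ⟨hp, h.1, i, i.isLt, Or.inl h⟩).mono (by linarith [dist2_le_dist1 p q])

end ReachableWithin

/-- The coordinate of `p` relative to `t` along the bisector of the cone `C_i`, scaled so that it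
equals the `L₁`-distance `‖p - t‖₁` when `p` lies in `C_i(t)`. -/
def coneCoord (t : ℝ × ℝ) (i : Fin 4) (p : ℝ × ℝ) : ℝ :=
  match i with
  | 0 => (p.1 - t.1) - (p.2 - t.2)
  | 1 => (p.1 - t.1) + (p.2 - t.2)
  | 2 => -((p.1 - t.1) - (p.2 - t.2))
  | 3 => -((p.1 - t.1) + (p.2 - t.2))

/-- The cones `C_i` and `C_k` are adjacent, so that their bisectors are perpendicular. -/
def Perp (i k : Fin 4) : Prop := k = i + 1 ∨ i = k + 1

instance : DecidableRel Perp := fun _ _ => inferInstanceAs (Decidable (_ ∨ _))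

section Coordinates

variable {i k l : Fin 4} {t p q : ℝ × ℝ}

theorem Perp.symm (h : Perp i k) : Perp k i :=
  Or.symm h

theorem Perp.add_two (h : Perp i k) : Perp i (k + 2) := by
  revert i k; decide

theorem Perp.eq_or_eq_add_two (hk : Perp i k) (hl : Perp i l) : l = k ∨ l = k + 2 := by
  revert i k l; decide

theorem Perp.cases (h : Perp i k) (l : Fin 4) : l = i ∨ l = i + 2 ∨ l = k ∨ l = k + 2 := by
  revert i k l; decide

theorem coneCoord_self : coneCoord t i t = 0 := by
  unfold coneCoord; split <;> ring

theorem coneCoord_add_two : coneCoord t (i + 2) p = -coneCoord t i p := by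
  match i with
  | 0 | 1 => rfl
  | 2 | 3 => exact (neg_neg _).symm

theorem cone_add_two_iff : cone ↑(i + 2) p q ↔ cone i q p := by
  match i with
  | 0 | 1 | 2 | 3 => exact Iff.rfl

theorem exists_cone (hx : p.1 ≠ q.1) (hy : p.2 ≠ q.2) : ∃ i : Fin 4, cone i p q := by
  rcases hx.lt_or_gt with hx | hx <;> rcases hy.lt_or_gt with hy | hy
  · exact ⟨1, hx, hy⟩
  · exact ⟨0, hx, hy⟩
  · exact ⟨2, hx, hy⟩
  · exact ⟨3, hx, hy⟩

theorem Perp.cone_iff (h : Perp i k) (t : ℝ × ℝ) :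
    cone i p q ↔ |coneCoord t k q - coneCoord t k p| < coneCoord t i q - coneCoord t i p := by
  rw [abs_lt]
  match i, k with
  | 0, 1 | 2, 1 | 0, 3 | 2, 3 | 1, 0 | 1, 2 | 3, 0 | 3, 2 =>
    simp only [coneCoord]
    refine ⟨fun ⟨_, _⟩ => ⟨?_, ?_⟩, fun ⟨_, _⟩ => ⟨?_, ?_⟩⟩ <;> linarith
  | 0, 0 | 1, 1 | 2, 2 | 3, 3 | 0, 2 | 2, 0 | 1, 3 | 3, 1 => exact absurd h (by decide)

theorem dist1_eq_of_cone (t : ℝ × ℝ) (h : cone i p q) :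
    dist1 p q = coneCoord t i q - coneCoord t i p := by
  unfold dist1 coneCoord
  split <;> obtain ⟨hx, hy⟩ := h
  · rw [abs_of_neg (sub_neg.2 hx), abs_of_pos (sub_pos.2 hy)]
    ring
  · rw [abs_of_neg (sub_neg.2 hx), abs_of_neg (sub_neg.2 hy)]
    ring
  · rw [abs_of_pos (sub_pos.2 hx), abs_of_neg (sub_neg.2 hy)]
    ring
  · rw [abs_of_pos (sub_pos.2 hx), abs_of_pos (sub_pos.2 hy)]
    ring

theorem two_mul_max_abs (x y : ℝ) : 2 * max |x| |y| = |x - y| + |x + y| := by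
  cases abs_cases x <;> cases abs_cases y <;> cases abs_cases (x + y) <;>
    cases abs_cases (x - y) <;> cases max_cases |x| |y| <;> linarith

theorem Perp.two_mul_distInf (h : Perp i k) (t p : ℝ × ℝ) :
    2 * distInf p t = |coneCoord t i p| + |coneCoord t k p| := by
  rw [distInf, two_mul_max_abs]
  match i, k with
  | 0, 1 | 2, 1 | 0, 3 | 2, 3 => simp only [coneCoord, abs_neg]
  | 1, 0 | 1, 2 | 3, 0 | 3, 2 => simp only [coneCoord, abs_neg, add_comm]
  | 0, 0 | 1, 1 | 2, 2 | 3, 3 | 0, 2 | 2, 0 | 1, 3 | 3, 1 => exact absurd h (by decide)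

end Coordinates

section Sweeps

variable {P : Finset (ℝ × ℝ)} {i k l : Fin 4} {t p q r z : ℝ × ℝ}

theorem exists_nearest (t : ℝ × ℝ) (hp : p ∈ P) (hz : z ∈ P) (hpz : cone i p z) :
    ∃ q ∈ P, cone i p q ∧ (∀ w ∈ P, cone i p w → coneCoord t i q ≤ coneCoord t i w) ∧
      ReachableWithin P p q (coneCoord t i q - coneCoord t i p) := by
  classical
  obtain ⟨q, hq, hmin⟩ := (P.filter (cone i p)).exists_min_image (dist1 p)
    ⟨z, Finset.mem_filter.2 ⟨hz, hpz⟩⟩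
  simp only [Finset.mem_filter, and_imp] at hq hmin
  refine ⟨q, hq.1, hq.2, fun w hw hpw => ?_, ?_⟩
  · have hle := hmin w hw hpw
    rw [dist1_eq_of_cone t hq.2, dist1_eq_of_cone t hpw] at hle
    linarith
  · rw [← dist1_eq_of_cone t hq.2]
    exact .of_isNbr hp ⟨hq.1, hq.2, hmin⟩

/-- `TProtected` in an arbitrary direction: every point of `P` in `C_k(p)` lies strictly beyond the
line through `t` perpendicular to the bisector of `C_k`; `TProtected P t` is the case `k = 1`. -/
def IsProtected (P : Finset (ℝ × ℝ)) (t : ℝ × ℝ) (k : Fin 4) (p : ℝ × ℝ) : Prop :=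
  ∀ z ∈ P, cone k p z → 0 < coneCoord t k z

/-- The displacement from `p` to `q` is that of a path of steps into cones `C_k`, none of which
passes the line through `t` perpendicular to the bisector of `C_k`. -/
def IsSweep (t : ℝ × ℝ) (i k : Fin 4) (p q : ℝ × ℝ) : Prop :=
  coneCoord t k q ≤ 0 ∧
    |coneCoord t i q - coneCoord t i p| ≤ coneCoord t k q - coneCoord t k p

theorem exists_sweep (hik : Perp i k) (hp : p ∈ P) (hpk : coneCoord t k p ≤ 0) :
    ∃ q ∈ P, IsSweep t i k p q ∧ IsProtected P t k q ∧
      ReachableWithin P p q (coneCoord t k q - coneCoord t k p) := by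
  revert hpk
  refine induction_on_value (fun z => -coneCoord t k z) hp fun p hp ih hpk => ?_
  by_cases hprot : IsProtected P t k p
  · exact ⟨p, hp, ⟨hpk, by simp⟩, hprot, by simpa using .refl hp⟩
  · obtain ⟨z, hz, hpz, hzk⟩ : ∃ z ∈ P, cone k p z ∧ coneCoord t k z ≤ 0 := by
      simpa [IsProtected] using hprot
    obtain ⟨q, hq, hpq, hmin, hreach⟩ := exists_nearest t hp hz hpz
    have hstep := (hik.symm.cone_iff t).1 hpq
    obtain ⟨r, hr, ⟨hrk, hqr⟩, hrprot, hreach'⟩ :=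
      ih q hq (by linarith [abs_nonneg (coneCoord t i q - coneCoord t i p)])
        ((hmin z hz hpz).trans hzk)
    have htri := abs_sub_le (coneCoord t i r) (coneCoord t i q) (coneCoord t i p)
    exact ⟨r, hr, ⟨hrk, by linarith⟩, hrprot, (hreach.trans hreach').mono (by linarith)⟩

theorem IsSweep.distInf_le (h : IsSweep t i k p q) (hik : Perp i k) :
    distInf q t ≤ distInf p t := by
  obtain ⟨hqk, hle⟩ := h
  have hp := hik.two_mul_distInf t p
  have hq := hik.two_mul_distInf t q
  rw [abs_of_nonpos hqk] at hq
  linarith [abs_sub_abs_le_abs_sub (coneCoord t i q) (coneCoord t i p),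
    neg_abs_le (coneCoord t k p)]

theorem distInf_lt_of_cone (hik : Perp i k) (h : cone i q p) (hq : 0 ≤ coneCoord t i q) :
    distInf q t < distInf p t := by
  rw [hik.cone_iff t, abs_sub_comm] at h
  have hp := hik.two_mul_distInf t p
  have hq' := hik.two_mul_distInf t q
  rw [abs_of_nonneg hq] at hq'
  linarith [abs_sub_abs_le_abs_sub (coneCoord t k q) (coneCoord t k p),
    le_abs_self (coneCoord t i p)]

/-- A point of `P` in the closed quadrant between direction `i` and the direction opposite to `k`
at `t` from which no further sweep in direction `k` is possible. -/
structure IsSettled (P : Finset (ℝ × ℝ)) (t : ℝ × ℝ) (i k : Fin 4) (p : ℝ × ℝ) : Prop where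
  mem : p ∈ P
  perp : Perp i k
  nonneg : 0 ≤ coneCoord t i p
  nonpos : coneCoord t k p ≤ 0
  isProtected : IsProtected P t k p

/-- `q` is a point of `P` in the cone of `p` opposite to `C_i`, and the highest such point in
direction `i`. -/
structure IsDescent (P : Finset (ℝ × ℝ)) (t : ℝ × ℝ) (i : Fin 4) (p q : ℝ × ℝ) : Prop where
  mem : q ∈ P
  below : cone i q p
  highest : ∀ z ∈ P, cone i z p → coneCoord t i z ≤ coneCoord t i q

theorem exists_descent (hp : p ∈ P) (hz : z ∈ P) (hzp : cone i z p) :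
    ∃ q, IsDescent P t i p q ∧
      ReachableWithin P p q (coneCoord t i p - coneCoord t i q) := by
  obtain ⟨q, hq, hpq, hmin, hreach⟩ := exists_nearest t hp hz (cone_add_two_iff.2 hzp)
  simp only [coneCoord_add_two, cone_add_two_iff, neg_le_neg_iff] at hpq hmin hreach
  exact ⟨q, ⟨hq, hpq, hmin⟩, hreach.mono (by linarith)⟩

variable (hx : Set.InjOn Prod.fst (P : Set (ℝ × ℝ))) (hy : Set.InjOn Prod.snd (P : Set (ℝ × ℝ)))

include hx hy

theorem IsSettled.cone_of_distInf_lt (hp : IsSettled P t i k p) (hz : z ∈ P)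
    (hzk : coneCoord t k z ≤ 0) (hlt : distInf z t < distInf p t) : cone i z p := by
  have hne : p ≠ z := by rintro rfl; exact hlt.false
  have hdp := hp.perp.two_mul_distInf t p
  have hdz := hp.perp.two_mul_distInf t z
  rw [abs_of_nonneg hp.nonneg, abs_of_nonpos hp.nonpos] at hdp
  rw [abs_of_nonpos hzk] at hdz
  obtain ⟨l, hl⟩ := exists_cone (hx.ne hp.mem hz hne) (hy.ne hp.mem hz hne)
  rcases hp.perp.cases l with rfl | rfl | rfl | rfl
  · rw [hp.perp.cone_iff t] at hl
    linarith [le_abs_self (coneCoord t k z - coneCoord t k p), le_abs_self (coneCoord t l z)]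
  · exact cone_add_two_iff.1 hl
  · exact absurd (hp.isProtected z hz hl) hzk.not_gt
  · rw [cone_add_two_iff, hp.perp.symm.cone_iff t] at hl
    linarith [le_abs_self (coneCoord t i p - coneCoord t i z), le_abs_self (coneCoord t i z)]

theorem IsSettled.coneCoord_le_of_isSweep (hp : IsSettled P t i k p) (hq : IsDescent P t i p q)
    (hil : Perp i l) (hqr : IsSweep t i l q r) (hr : r ∈ P) (hlt : distInf r t < distInf p t) :
    coneCoord t i r ≤ coneCoord t i q := by
  rcases le_or_gt (coneCoord t k r) 0 with hrk | hrk
  · exact hq.highest r hr (hp.cone_of_distInf_lt hx hy hr hrk hlt)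
  · by_contra! hgt
    obtain ⟨hrl, hqr⟩ := hqr
    obtain rfl : l = k + 2 := (hp.perp.eq_or_eq_add_two hil).resolve_left
      (by rintro rfl; exact hrk.not_ge hrl)
    have hpq := (hp.perp.cone_iff t).1 hq.below
    refine hgt.not_ge (hq.highest r hr ((hp.perp.cone_iff t).2 ?_))
    simp only [coneCoord_add_two] at hqr
    rw [abs_sub_comm, abs_of_pos (by linarith [hp.nonpos])]
    linarith [le_abs_self (coneCoord t i r - coneCoord t i q),
      neg_abs_le (coneCoord t k p - coneCoord t k q)]

theorem IsSettled.distInf_le_half_of_isSweep {D : ℝ} (hp : IsSettled P t i k p)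
    (hq : IsDescent P t i p q) (hqi : 0 ≤ coneCoord t i q) (hqr : IsSweep t i l q r)
    (hil : Perp i l) (hri : coneCoord t i r < 0) (hD : distInf p t ≤ D) (hz : z ∈ P)
    (htz : cone i t z) (hzk : coneCoord t k z ≤ 0) (hzr : distInf z t ≤ distInf r t) :
    distInf z t ≤ D / 2 := by
  have hqp := distInf_lt_of_cone hp.perp hq.below hqi
  have hrq := hqr.distInf_le hil
  have hzq := hq.highest z hz (hp.cone_of_distInf_lt hx hy hz hzk (by linarith))
  have hdz := hp.perp.two_mul_distInf t z
  have hdq := hil.two_mul_distInf t q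
  have hdr := hil.two_mul_distInf t r
  rw [hp.perp.cone_iff t, coneCoord_self, coneCoord_self, sub_zero, sub_zero] at htz
  rw [abs_of_neg hri, abs_of_nonpos hqr.1] at hdr
  rw [abs_of_nonneg hqi] at hdq
  rw [abs_of_pos (by linarith [abs_nonneg (coneCoord t k z)])] at hdz
  have hz_le : distInf z t ≤ coneCoord t i q := by linarith
  have hsum : coneCoord t i q + distInf r t ≤ distInf q t := by
    linarith [hqr.2, neg_abs_le (coneCoord t i r - coneCoord t i q), neg_abs_le (coneCoord t l q)]
  linarith only [hz_le, hsum, hzr, hqp, hD]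

end Sweeps

section Phases

variable {P : Finset (ℝ × ℝ)} {i k : Fin 4} {t p r : ℝ × ℝ} {D m n : ℝ}

open Classical in
/-- The octants at `t` that contain a point of `P` at `L∞`-distance in `(D / 2, n]` from `t`. The
octant of points of `C_i(t)` on the side of its bisector away from `C_k` is encoded as `(i, k)`. -/
noncomputable def occupiedOctants (P : Finset (ℝ × ℝ)) (t : ℝ × ℝ) (D n : ℝ) :
    Finset (Fin 4 × Fin 4) :=
  {o | Perp o.1 o.2 ∧ ∃ z ∈ P, cone o.1 t z ∧ coneCoord t o.2 z ≤ 0 ∧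
    D / 2 < distInf z t ∧ distInf z t ≤ n}

theorem mem_occupiedOctants : (i, k) ∈ occupiedOctants P t D n ↔
    Perp i k ∧ ∃ z ∈ P, cone i t z ∧ coneCoord t k z ≤ 0 ∧
      D / 2 < distInf z t ∧ distInf z t ≤ n := by
  simp [occupiedOctants]

theorem card_occupiedOctants_le : (occupiedOctants P t D n).card ≤ 8 := by
  have hsub : occupiedOctants P t D n ⊆ Finset.univ.filter fun o => Perp o.1 o.2 := fun o ho =>
    Finset.mem_filter.2 ⟨Finset.mem_univ o, (mem_occupiedOctants.1 ho).1⟩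
  exact (Finset.card_le_card hsub).trans (by decide)

theorem occupiedOctants_mono (hnm : n ≤ m) :
    occupiedOctants P t D n ⊆ occupiedOctants P t D m := fun _ ho =>
  let ⟨hperp, z, hz, htz, hzk, hfar, hzn⟩ := mem_occupiedOctants.1 ho
  mem_occupiedOctants.2 ⟨hperp, z, hz, htz, hzk, hfar, hzn.trans hnm⟩

theorem occupiedOctants_ssubset (hle : distInf r t ≤ distInf p t) (hik : Perp i k) (hp : p ∈ P)
    (htp : cone i t p) (hpk : coneCoord t k p ≤ 0) (hfar : D / 2 < distInf p t)
    (hempty : ∀ z ∈ P, cone i t z → coneCoord t k z ≤ 0 → distInf z t ≤ distInf r t →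
      distInf z t ≤ D / 2) :
    occupiedOctants P t D (distInf r t) ⊂ occupiedOctants P t D (distInf p t) := by
  refine (Finset.ssubset_iff_of_subset (occupiedOctants_mono hle)).2 ⟨(i, k), ?_, fun hmem => ?_⟩
  · exact mem_occupiedOctants.2 ⟨hik, p, hp, htp, hpk, hfar, le_rfl⟩
  · obtain ⟨-, z, hz, htz, hzk, hzD, hzr⟩ := mem_occupiedOctants.1 hmem
    exact (hempty z hz htz hzk hzr).not_gt hzD

theorem exists_perp_nonpos (i : Fin 4) (t p : ℝ × ℝ) : ∃ k, Perp i k ∧ coneCoord t k p ≤ 0 := by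
  have hperp : Perp i (i + 1) := Or.inl rfl
  rcases le_total (coneCoord t (i + 1) p) 0 with h | h
  · exact ⟨i + 1, hperp, h⟩
  · exact ⟨i + 1 + 2, hperp.add_two, by rwa [coneCoord_add_two, neg_nonpos]⟩

variable (hx : Set.InjOn Prod.fst (P : Set (ℝ × ℝ))) (hy : Set.InjOn Prod.snd (P : Set (ℝ × ℝ)))

include hx hy

theorem IsSettled.cone_target (hp : IsSettled P t i k p) (ht : t ∈ P) (hpt : 0 < distInf p t) :
    cone i t p :=
  hp.cone_of_distInf_lt hx hy ht coneCoord_self.le (by rwa [distInf_self])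

theorem IsSettled.exists_round (hp : IsSettled P t i k p) (ht : t ∈ P)
    (hpt : 0 < distInf p t) (hD : distInf p t ≤ D) :
    ∃ r ∈ P, distInf r t < distInf p t ∧
      ((∃ l, IsSettled P t i l r ∧ ReachableWithin P p r
          (coneCoord t i p + 2 * distInf p t - (coneCoord t i r + 2 * distInf r t))) ∨
        (ReachableWithin P p r (coneCoord t i p + 2 * distInf p t) ∧
          ∀ z ∈ P, cone i t z → coneCoord t k z ≤ 0 → distInf z t ≤ distInf r t →
            distInf z t ≤ D / 2)) := by
  have htp := hp.cone_target hx hy ht hpt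
  obtain ⟨q, hq, hpq⟩ := exists_descent hp.mem ht htp
  have hqi : 0 ≤ coneCoord t i q := coneCoord_self.ge.trans (hq.highest t ht htp)
  obtain ⟨l, hil, hql⟩ := exists_perp_nonpos i t q
  obtain ⟨r, hr, hqr, hrprot, hreach⟩ := exists_sweep hil hq.mem hql
  have hqp := distInf_lt_of_cone hp.perp hq.below hqi
  have hrp : distInf r t < distInf p t := (hqr.distInf_le hil).trans_lt hqp
  have hdq := hil.two_mul_distInf t q
  rw [abs_of_nonneg hqi, abs_of_nonpos hql] at hdq
  refine ⟨r, hr, hrp, ?_⟩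
  rcases le_or_gt 0 (coneCoord t i r) with hri | hri
  -- The potential `coneCoord t i + 2 * distInf · t` pays for both parts: the descent costs what
  -- its first summand loses from `p` to `q`, the sweep at most what its second loses from `q` to
  -- `r`, and the first does not grow back during the sweep.
  · have hrq := hp.coneCoord_le_of_isSweep hx hy hq hil hqr hr hrp
    have hdr := hil.two_mul_distInf t r
    rw [abs_of_nonneg hri, abs_of_nonpos hqr.1] at hdr
    exact Or.inl ⟨l, ⟨hr, hil, hri, hqr.1, hrprot⟩, (hpq.trans hreach).mono (by linarith)⟩
  · exact Or.inr ⟨(hpq.trans hreach).mono (by linarith [hqr.1]), fun z hz htz hzk hzr =>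
      hp.distInf_le_half_of_isSweep hx hy hq hqi hqr hil hri hD hz htz hzk hzr⟩

theorem exists_phase_of_isSettled (ht : t ∈ P) (k : Fin 4) (hp : IsSettled P t i k p)
    (hfar : D / 2 < distInf p t) (hD : distInf p t ≤ D) :
    ∃ r ∈ P, distInf r t ≤ distInf p t ∧
      ReachableWithin P p r (coneCoord t i p + 2 * distInf p t) ∧
      occupiedOctants P t D (distInf r t) ⊂ occupiedOctants P t D (distInf p t) := by
  have hpP := hp.mem
  revert k hfar hD
  refine induction_on_value (fun z => distInf z t) hpP fun p hpP ih k hp hfar hD => ?_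
  have hpt : 0 < distInf p t := by linarith
  have htp := hp.cone_target hx hy ht hpt
  obtain ⟨r, hr, hrp, ⟨l, hrset, hpr⟩ | ⟨hpr, hempty⟩⟩ := hp.exists_round hx hy ht hpt hD
  · rcases le_or_gt (distInf r t) (D / 2) with hnear | hfar'
    · exact ⟨r, hr, hrp.le, hpr.mono (by linarith [hrset.nonneg, distInf_nonneg r t]),
        occupiedOctants_ssubset hrp.le hp.perp hpP htp hp.nonpos hfar
          fun z _ _ _ hzr => hzr.trans hnear⟩
    · obtain ⟨s, hs, hsr, hrs, hsub⟩ := ih r hr hrp l hrset hfar' (hrp.le.trans hD)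
      exact ⟨s, hs, hsr.trans hrp.le, (hpr.trans hrs).mono (by linarith),
        hsub.trans_subset (occupiedOctants_mono hrp.le)⟩
  · exact ⟨r, hr, hrp.le, hpr,
      occupiedOctants_ssubset hrp.le hp.perp hpP htp hp.nonpos hfar hempty⟩

theorem exists_phase (ht : t ∈ P) (hp : p ∈ P) (hfar : D / 2 < distInf p t)
    (hD : distInf p t ≤ D) :
    ∃ r ∈ P, distInf r t ≤ distInf p t ∧ ReachableWithin P p r (5 * D) ∧
      occupiedOctants P t D (distInf r t) ⊂ occupiedOctants P t D (distInf p t) := by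
  have hne : t ≠ p := by rintro rfl; rw [distInf_self] at hfar hD; linarith
  obtain ⟨i, htp⟩ := exists_cone (hx.ne ht hp hne) (hy.ne ht hp hne)
  obtain ⟨k, hik, hpk⟩ := exists_perp_nonpos i t p
  obtain ⟨q, hq, hpq, hqprot, hreach⟩ := exists_sweep hik hp hpk
  have hqp := hpq.distInf_le hik
  have hcone := (hik.cone_iff t).1 htp
  rw [coneCoord_self, coneCoord_self, sub_zero, sub_zero, abs_of_nonpos hpk] at hcone
  have hqi : 0 ≤ coneCoord t i q := by
    linarith [hpq.1, hpq.2, neg_abs_le (coneCoord t i q - coneCoord t i p)]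
  have hdp := hik.two_mul_distInf t p
  have hdq := hik.two_mul_distInf t q
  rw [abs_of_nonneg (by linarith), abs_of_nonpos hpk] at hdp
  rw [abs_of_nonneg hqi, abs_of_nonpos hpq.1] at hdq
  rcases le_or_gt (distInf q t) (D / 2) with hnear | hfar'
  · exact ⟨q, hq, hqp, hreach.mono (by linarith [hpq.1]),
      occupiedOctants_ssubset hqp hik hp htp hpk hfar fun z _ _ _ hzq => hzq.trans hnear⟩
  · obtain ⟨r, hr, hrq, hqr, hsub⟩ := exists_phase_of_isSettled hx hy ht k
      ⟨hq, hik, hqi, hpq.1, hqprot⟩ hfar' (hqp.trans hD)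
    exact ⟨r, hr, hrq.trans hqp, (hreach.trans hqr).mono (by linarith [hpq.1]),
      hsub.trans_subset (occupiedOctants_mono hqp)⟩

theorem exists_halving (ht : t ∈ P) (hp : p ∈ P) (hD : distInf p t ≤ D) :
    ∃ r ∈ P, distInf r t ≤ D / 2 ∧
      ReachableWithin P p r (5 * D * (occupiedOctants P t D (distInf p t)).card) := by
  have hD₀ : 0 ≤ D := (distInf_nonneg p t).trans hD
  revert hD
  refine induction_on_value (fun z => (occupiedOctants P t D (distInf z t)).card) hp
    fun p hp ih hD => ?_
  rcases le_or_gt (distInf p t) (D / 2) with hnear | hfar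
  · exact ⟨p, hp, hnear, (ReachableWithin.refl hp).mono (by positivity)⟩
  · obtain ⟨q, hq, hqp, hpq, hsub⟩ := exists_phase hx hy ht hp hfar hD
    have hcard := Finset.card_lt_card hsub
    obtain ⟨r, hr, hrD, hqr⟩ := ih q hq hcard (hqp.trans hD)
    refine ⟨r, hr, hrD, (hpq.trans hqr).mono ?_⟩
    have hcard' : ((occupiedOctants P t D (distInf q t)).card : ℝ) + 1 ≤
        (occupiedOctants P t D (distInf p t)).card := by exact_mod_cast hcard
    nlinarith

end Phases

theorem delaunay_edge_path_general {P : Finset (ℝ × ℝ)}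
    (hx : Set.InjOn Prod.fst (P : Set (ℝ × ℝ))) (hy : Set.InjOn Prod.snd (P : Set (ℝ × ℝ)))
    {a b : ℝ × ℝ} (ha : a ∈ P) (hb : b ∈ P) : ReachableWithin P a b (80 * distInf a b) := by
  refine induction_on_value (fun z => distInf z b) ha fun p hp ih => ?_
  rcases (distInf_nonneg p b).eq_or_lt with hzero | hpos
  · rw [← hzero, eq_of_distInf_le_zero hzero.ge, mul_zero]
    exact .refl hb
  · obtain ⟨r, hr, hhalf, hpr⟩ := exists_halving hx hy hb hp le_rfl
    have hcard : ((occupiedOctants P b (distInf p b) (distInf p b)).card : ℝ) ≤ 8 := by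
      exact_mod_cast card_occupiedOctants_le
    exact (hpr.trans (ih r hr (by linarith))).mono (by nlinarith)

/-- If `(a,b,c)` is a triangle of the `L∞`-Delaunay triangulation of `P`, then there is an
`a`-`b`-path in the θ₄-graph of length at most `(1+√2)·(√2+36)·‖a−b‖₂`. -/
theorem delaunay_edge_path (P : Finset (ℝ × ℝ)) (hP : GenPos P) (a b c : ℝ × ℝ)
    (ha : a ∈ P) (hb : b ∈ P) (hc : c ∈ P)
    (hsq : ∃ x0 y0 L : ℝ, 0 ≤ L ∧
      onBoundary x0 y0 L a ∧ onBoundary x0 y0 L b ∧ onBoundary x0 y0 L c ∧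
      ∀ q ∈ P, ¬ (x0 < q.1 ∧ q.1 < x0 + L ∧ y0 < q.2 ∧ q.2 < y0 + L)) :
    ∃ (k : ℕ) (v : ℕ → ℝ × ℝ), IsTheta4Path P k v ∧ v 0 = a ∧ v k = b ∧
      pathLength k v ≤ (1 + Real.sqrt 2) * (Real.sqrt 2 + 36) * dist2 a b :=
  (delaunay_edge_path_general hP.injOn_fst hP.injOn_snd ha hb).mono (eighty_mul_distInf_le a b)
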